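/- Let k be a field and let D be a finite-dimensional associative division algebra over k whose center is exactly k and whose dimension over k is 9 (i.e., D is a central division algebra of degree 3 over k). Then D contains a cyclic cubic subfield: there exists a k-subalgebra L of D that is commutative and a field, such that L has dimension 3 over k and the field extension L/k is Galois with cyclic Galois group (necessarily of order 3). -/

import Mathlib

namespace WedD

/-- `D` has an element commuting with, but distinct from, one of its conjugates. -/
def Good (D : Type*) [DivisionRing D] : Prop :=
  ∃ x u : D, u ≠ 0 ∧ x * (u * x * u⁻¹) = (u * x * u⁻¹) * x ∧ u * x * u⁻¹ ≠ x

section alg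
variable {D : Type*} [DivisionRing D]

theorem step (x s c n e : D) (hs : ∀ z, s * z = z * s) (hc : ∀ z, c * z = z * c)
    (hn : ∀ z, n * z = z * n) (he : x * e ≠ e * x)
    (hx : x * x * x = s * (x * x) - c * x + n) :
    Good D ∨ (∃ y, x * y ≠ y * x ∧ x * x + x * y + y * y - s * (x + y) + c = 0) ∨
      3 * (x * x) - 2 * (s * x) + c = 0 := by
  have he0 : e ≠ 0 := by rintro rfl; simp at he
  obtain ⟨b, hb⟩ : ∃ b, b = e * x * e⁻¹ := ⟨_, rfl⟩
  have hbe : b * e = e * x := by rw [hb]; simp [mul_assoc, he0]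
  have hbx : b - x ≠ 0 := by
    intro h
    rw [sub_eq_zero.mp h] at hbe
    exact he hbe
  obtain ⟨h, hh⟩ : ∃ h, h = b - x := ⟨_, rfl⟩
  rw [← hh] at hbx
  have hbc : b * b * b = s * (b * b) - c * b + n := by
    have h1 : (b * b * b) * e = (s * (b * b) - c * b + n) * e := by
      have e2 : b * b * e = e * (x * x) := by
        rw [mul_assoc, hbe, ← mul_assoc, hbe, mul_assoc]
      have e3 : b * b * b * e = e * (x * x * x) := by
        rw [mul_assoc, hbe, ← mul_assoc, e2, mul_assoc]
      rw [e3, hx, add_mul, sub_mul, mul_assoc s, e2, mul_assoc c, hbe, hn,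
        hs (e * (x * x)), hc (e * x), hs (x * x), hc x]
      noncomm_ring
    exact mul_right_cancel₀ he0 h1
  obtain ⟨y, hy⟩ : ∃ y, y = h * b * h⁻¹ := ⟨_, rfl⟩
  have hyh : y * h = h * b := by rw [hy]; simp [mul_assoc, hbx]
  have key : x * x + x * y + y * y - s * (x + y) + c = 0 := by
    have h1 : (x * x + x * y + y * y - s * (x + y) + c) * h = 0 := by
      have e2 : y * y * h = h * b * b := by
        rw [mul_assoc, hyh, ← mul_assoc, hyh]
      have : (x * x + x * y + y * y - s * (x + y) + c) * h
        = x * x * h + x * (y * h) + y * y * h - s * (x * h + y * h) + c * h := by noncomm_ring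
      rw [this, e2, hyh, hh]
      have : x * x * (b - x) + x * ((b - x) * b) + (b - x) * b * b
          - s * (x * (b - x) + (b - x) * b) + c * (b - x)
          = (b * b * b - s * (b * b) + c * b) - (x * x * x - s * (x * x) + c * x) := by
        noncomm_ring
      rw [this, hbc, hx]; noncomm_ring
    exact (mul_eq_zero.mp h1).resolve_right hbx
  by_cases hxy : x * y = y * x
  · by_cases hyx : y = x
    · right; right
      rw [hyx] at key
      rw [← key]; noncomm_ring
    · left
      have hyc : (h * e) * x * (h * e)⁻¹ = y := by
        rw [hy, hb, mul_inv_rev]; simp only [mul_assoc]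
      exact ⟨x, h * e, mul_ne_zero hbx he0, by rw [hyc, hxy], by rwa [hyc]⟩
  · exact Or.inr (Or.inl ⟨y, hxy, key⟩)

theorem char3 (x n e : D) (h3 : (3 : D) = 0) (he : x * e ≠ e * x)
    (hn : ∀ z, n * z = z * n) (hx : x * x * x = n) : Good D := by
  have hx0 : x ≠ 0 := by rintro rfl; simp at he
  obtain ⟨v, hv, hv2⟩ : ∃ v, x * v - v * x ≠ 0 ∧
      x * (x * v - v * x) - (x * v - v * x) * x = 0 := by
    by_cases h : x * (x * e - e * x) - (x * e - e * x) * x = 0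
    · exact ⟨e, sub_ne_zero.mpr he, h⟩
    · refine ⟨x * e - e * x, h, ?_⟩
      have : x * (x * (x * e - e * x) - (x * e - e * x) * x)
          - (x * (x * e - e * x) - (x * e - e * x) * x) * x
          = x * x * x * e - e * (x * x * x) - 3 * (x * x * e * x) + 3 * (x * e * x * x) := by
        noncomm_ring
      rw [this, hx, h3, hn]; simp
  obtain ⟨w, hw⟩ : ∃ w, w = x * v - v * x := ⟨_, rfl⟩
  rw [← hw] at hv hv2
  have hc : w⁻¹ * x = x * w⁻¹ := by
    have : Commute x w := sub_eq_zero.mp hv2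
    exact (this.inv_right₀).eq.symm
  have key : x * (v * w⁻¹ * x) * x⁻¹ = v * w⁻¹ * x + 1 := by
    rw [mul_inv_eq_iff_eq_mul₀ hx0]
    have : x * (v * w⁻¹ * x) = (x * v - v * x) * w⁻¹ * x + v * (x * w⁻¹) * x := by
      noncomm_ring
    rw [this, ← hw, mul_inv_cancel₀ hv, ← hc]; noncomm_ring
  refine ⟨v * w⁻¹ * x, x, hx0, ?_, ?_⟩
  · rw [key]; noncomm_ring
  · rw [key]; simp

theorem final (x y : D) (hxy : x * y ≠ y * x) (h : x * x + x * y + y * y = 0) : Good D := by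
  have hx0 : x ≠ 0 := by rintro rfl; simp at hxy
  have hy0 : y ≠ 0 := by rintro rfl; simp at hxy
  have e1 : x⁻¹ * (x * y⁻¹) * x⁻¹⁻¹ = y⁻¹ * x := by
    rw [inv_inv, ← mul_assoc, inv_mul_cancel₀ hx0, one_mul]
  have e2 : x * y⁻¹ + 1 + x⁻¹ * y = 0 := by
    have : x⁻¹ * (x * x + x * y + y * y) * y⁻¹ = x * y⁻¹ + 1 + x⁻¹ * y := by
      have : x⁻¹ * (x * x + x * y + y * y) * y⁻¹
        = (x⁻¹ * x) * x * y⁻¹ + (x⁻¹ * x) * (y * y⁻¹) + x⁻¹ * y * (y * y⁻¹) := by noncomm_ring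
      rw [this, inv_mul_cancel₀ hx0, mul_inv_cancel₀ hy0]; simp
    rw [← this, h]; simp
  have e3 : y⁻¹ * x = (x⁻¹ * y)⁻¹ := by rw [mul_inv_rev, inv_inv]
  have hcomm : Commute (x * y⁻¹) (x⁻¹ * y) := by
    have : x⁻¹ * y = -(x * y⁻¹) - 1 := by
      rw [eq_sub_iff_add_eq, ← sub_eq_zero, ← e2]; noncomm_ring
    rw [this]
    exact ((Commute.refl _).neg_right).sub_right (Commute.one_right _)
  refine ⟨x * y⁻¹, x⁻¹, inv_ne_zero hx0, ?_, ?_⟩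
  · rw [e1, e3]; exact hcomm.inv_right₀
  · rw [e1]; intro h'
    apply hxy
    have : y * (y⁻¹ * x) * y = y * (x * y⁻¹) * y := by rw [h']
    rw [← mul_assoc, mul_inv_cancel₀ hy0, one_mul] at this
    rw [this]; simp [mul_assoc, hy0]

theorem cube (x y s c : D) (hs : ∀ z, s * z = z * s) (hc : ∀ z, c * z = z * c)
    (hxy : x * y ≠ y * x) (h : x * x + x * y + y * y - s * (x + y) + c = 0) :
    ∃ a e, a * e ≠ e * a ∧ a * a * a * x = x * (a * a * a) ∧ a * a * a * y = y * (a * a * a) := by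
  obtain ⟨a, ha⟩ : ∃ a, a = x * y - y * x := ⟨_, rfl⟩
  have ha0 : a ≠ 0 := by rw [ha]; exact sub_ne_zero.mpr hxy
  have h1 : a * y = (s - x - y) * a := by
    have : x * (x * x + x * y + y * y - s * (x + y) + c)
      - (x * x + x * y + y * y - s * (x + y) + c) * x = 0 := by rw [h]; simp
    have t : x * (x * x + x * y + y * y - s * (x + y) + c)
      - (x * x + x * y + y * y - s * (x + y) + c) * x = 
       x * a + a * y + y * a - s * a + (s * x - x * s) * (x + y) - (c * x - x * c) := by
       rw [ha]; noncomm_ring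
    rw [t, hs x, hc x] at this
    rw [← sub_eq_zero, ← this]; noncomm_ring
  have h2 : x * a = a * (s - x - y) := by
    have : (x * x + x * y + y * y - s * (x + y) + c) * y
      - y * (x * x + x * y + y * y - s * (x + y) + c) = 0 := by rw [h]; simp
    have t : (x * x + x * y + y * y - s * (x + y) + c) * y
      - y * (x * x + x * y + y * y - s * (x + y) + c) = 
       x * a + a * x + a * y - a * s + (a * s - s * a) - (s * y - y * s) * (x + y) + (c * y - y * c) := by
       rw [ha]; noncomm_ring
    rw [t, hs y, hc y, hs a] at this
    rw [← sub_eq_zero, ← this]; noncomm_ring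
  have h3 : a * x = y * a := by
    have e1 : a * x = a * s - a * y - a * (s - x - y) := by noncomm_ring
    rw [e1, h1, ← h2, ← hs]; noncomm_ring
  obtain ⟨z, hz⟩ : ∃ z, z = s - x - y := ⟨_, rfl⟩
  rw [← hz] at h1 h2
  refine ⟨a, x, ?_, ?_, ?_⟩
  · intro h'
    apply hxy
    have : y = x := mul_right_cancel₀ ha0 (by rw [← h3, h'])
    rw [this]
  · rw [mul_assoc, h3, mul_assoc a a, ← mul_assoc a y, h1, ← mul_assoc, ← mul_assoc, ← h2]
    simp only [mul_assoc]
  · rw [mul_assoc, h1, mul_assoc a a, ← mul_assoc a z, ← h2, ← mul_assoc, ← mul_assoc, h3]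
    simp only [mul_assoc]

end alg

section lin
variable {k : Type*} [Field k] {D : Type*} [DivisionRing D] [Algebra k D]

theorem dvd9 [FiniteDimensional k D] (S : Subalgebra k D) :
    Module.finrank k S ∣ Module.finrank k D := by
  letI := divisionRingOfFiniteDimensional k S
  exact ⟨_, (Module.finrank_mul_finrank k S D).symm⟩

theorem finrank_adjoin [FiniteDimensional k D] (x : D) :
    Module.finrank k (Algebra.adjoin k {x}) = (minpoly k x).natDegree := by
  rw [Algebra.adjoin_singleton_eq_range_aeval, ← finrank_quotient_span_eq_natDegree]
  have e := (Ideal.quotientKerAlgEquivOfSurjective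
    (f := (Polynomial.aeval (R := k) x).rangeRestrict)
    (AlgHom.rangeRestrict_surjective _)).toLinearEquiv.finrank_eq
  have hk : RingHom.ker (Polynomial.aeval (R := k) x).rangeRestrict
      = Ideal.span {minpoly k x} := by
    rw [AlgHom.ker_rangeRestrict]
    exact minpoly.ker_aeval_eq_span_minpoly k x
  rw [← e]
  exact (Ideal.quotientEquivAlgOfEq k hk).toLinearEquiv.finrank_eq

theorem proper [FiniteDimensional k D] (hdim : Module.finrank k D = 9) (S : Subalgebra k D)
    (hS : S ≠ ⊤) (x e : D) (hx : x * e ≠ e * x) (hxS : x ∈ S) : Module.finrank k S = 3 := by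
  have h1 := dvd9 S
  rw [hdim] at h1
  have h9 : Module.finrank k S ≠ 9 := by
    intro h
    apply hS
    apply Subalgebra.toSubmodule_injective
    rw [Algebra.top_toSubmodule]
    apply Submodule.eq_top_of_finrank_eq
    rw [hdim]; exact h
  have h11 : Module.finrank k S ≠ 1 := by
    intro h
    have := Subalgebra.eq_bot_of_finrank_one h
    rw [this] at hxS
    obtain ⟨r, rfl⟩ := Algebra.mem_bot.mp hxS
    exact hx (Algebra.commutes _ _)
  have : Module.finrank k S ∈ Nat.divisors 9 := by simp [h1]
  rw [show Nat.divisors 9 = {1, 3, 9} from by decide] at this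
  simp only [Finset.mem_insert, Finset.mem_singleton] at this; omega

theorem adjoin_comm (x : D) (a b : D) (ha : a ∈ Algebra.adjoin k {x})
    (hb : b ∈ Algebra.adjoin k {x}) : a * b = b * a := by
  rw [Algebra.adjoin_singleton_eq_range_aeval] at ha hb
  obtain ⟨p, rfl⟩ := ha
  obtain ⟨q, rfl⟩ := hb
  change Polynomial.aeval x p * Polynomial.aeval x q = Polynomial.aeval x q * Polynomial.aeval x p
  rw [← map_mul, mul_comm, map_mul]

theorem finrank_adjoin3 [FiniteDimensional k D] (hdim : Module.finrank k D = 9)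
    (x e : D) (hx : x * e ≠ e * x) : Module.finrank k (Algebra.adjoin k {x}) = 3 := by
  refine proper hdim _ ?_ x e hx (Algebra.self_mem_adjoin_singleton k x)
  intro h
  exact hx (adjoin_comm (k := k) x x e (h ▸ Algebra.mem_top) (h ▸ Algebra.mem_top))

theorem mem_adjoin [FiniteDimensional k D] (hdim : Module.finrank k D = 9)
    (x e y : D) (hx : x * e ≠ e * x) (hy : x * y = y * x) : y ∈ Algebra.adjoin k {x} := by
  have hle : Algebra.adjoin k {x} ≤ Subalgebra.centralizer k {x} := by
    rw [Algebra.adjoin_le_iff]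
    intro z hz
    rw [Set.mem_singleton_iff.mp hz, SetLike.mem_coe, Subalgebra.mem_centralizer_iff]
    intro w hw
    rw [Set.mem_singleton_iff.mp hw]
  have hc : Module.finrank k (Subalgebra.centralizer k {x}) = 3 := by
    refine proper hdim _ ?_ x e hx (by simp [Subalgebra.mem_centralizer_iff])
    intro h
    have : e ∈ Subalgebra.centralizer k {x} := h ▸ Algebra.mem_top
    rw [Subalgebra.mem_centralizer_iff] at this
    exact hx (this x rfl)
  have : Algebra.adjoin k {x} = Subalgebra.centralizer k {x} :=
    Subalgebra.eq_of_le_of_finrank_eq hle (by rw [hc, finrank_adjoin3 hdim x e hx])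
  rw [this, Subalgebra.mem_centralizer_iff]
  intro z hz
  rw [Set.mem_singleton_iff.mp hz, hy]

theorem central_of_comm [FiniteDimensional k D] (hdim : Module.finrank k D = 9)
    (x y z : D) (hxy : x * y ≠ y * x) (hx : z * x = x * z) (hy : z * y = y * z) (e : D) :
    z * e = e * z := by
  by_contra he
  exact hxy (adjoin_comm z x y (mem_adjoin (k := k) hdim z e x he hx) (mem_adjoin hdim z e y he hy))

theorem cubic [FiniteDimensional k D] (hdim : Module.finrank k D = 9)
    (x e : D) (hx : x * e ≠ e * x) : ∃ s c n : k,
    x * x * x = algebraMap k D s * (x * x) - algebraMap k D c * x + algebraMap k D n := by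
  have h := finrank_adjoin3 (k := k) hdim x e hx
  rw [finrank_adjoin] at h
  have hm := minpoly.monic (IsIntegral.of_finite k x)
  have h0 := minpoly.aeval k x
  rw [Polynomial.aeval_eq_sum_range, h] at h0
  have h3 : (minpoly k x).coeff 3 = 1 := by rw [← h]; exact hm
  simp only [Finset.sum_range_succ, Finset.sum_range_zero, h3, Algebra.smul_def] at h0
  refine ⟨-(minpoly k x).coeff 2, (minpoly k x).coeff 1, -(minpoly k x).coeff 0, ?_⟩
  rw [← sub_eq_zero, ← h0]
  simp only [map_neg, map_one]
  noncomm_ring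

theorem indep [FiniteDimensional k D] (hdim : Module.finrank k D = 9)
    (x e : D) (hx : x * e ≠ e * x) (p q r : k)
    (h : algebraMap k D p * (x * x) + algebraMap k D q * x + algebraMap k D r = 0) :
    p = 0 ∧ q = 0 ∧ r = 0 := by
  have hd := finrank_adjoin3 (k := k) hdim x e hx
  rw [finrank_adjoin] at hd
  let P : Polynomial k := .C p * .X ^ 2 + .C q * .X + .C r
  have hP : Polynomial.aeval x P = 0 := by
    simp [P, ← h, pow_two]
  have hP0 : P = 0 := by
    by_contra hne
    have h1 := Polynomial.natDegree_le_natDegree (minpoly.degree_le_of_ne_zero k x hne hP)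
    have h2 : P.natDegree ≤ 2 := Polynomial.natDegree_quadratic_le
    omega
  refine ⟨?_, ?_, ?_⟩
  · simpa [P, Polynomial.coeff_X, Polynomial.coeff_C] using congrArg (fun f => Polynomial.coeff f 2) hP0
  · simpa [P, Polynomial.coeff_X, Polynomial.coeff_C] using congrArg (fun f => Polynomial.coeff f 1) hP0
  · simpa [P, Polynomial.coeff_X, Polynomial.coeff_C] using congrArg (fun f => Polynomial.coeff f 0) hP0

theorem good_of_step [FiniteDimensional k D] (hdim : Module.finrank k D = 9)
    (x e : D) (hx : x * e ≠ e * x) (s c n : k)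
    (h : x * x * x = algebraMap k D s * (x * x) - algebraMap k D c * x + algebraMap k D n) :
    Good D ∨ ∃ y, x * y ≠ y * x ∧
      x * x + x * y + y * y - algebraMap k D s * (x + y) + algebraMap k D c = 0 := by
  rcases step x _ _ _ e (Algebra.commutes s) (Algebra.commutes c) (Algebra.commutes n) hx h
    with h1 | h1 | h1
  · exact Or.inl h1
  · exact Or.inr h1
  · left
    obtain ⟨a1, a2, a3⟩ := indep (k := k) hdim x e hx 3 (-2 * s) c (by
      rw [← h1]; simp only [map_mul, map_neg, map_ofNat]; noncomm_ring)
    have hs : s = 0 := by linear_combination a2 + s * a1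
    subst hs a3
    refine char3 x (algebraMap k D n) e ?_ hx (Algebra.commutes n) (by rw [h]; simp)
    rw [← map_ofNat (algebraMap k D), a1, map_zero]

theorem good [FiniteDimensional k D] (hcenter : Subalgebra.center k D = ⊥)
    (hdim : Module.finrank k D = 9) : Good D := by
  obtain ⟨x, e, hx⟩ : ∃ x e : D, x * e ≠ e * x := by
    by_contra! hall
    have : Subalgebra.center k D = ⊤ := by
      rw [eq_top_iff]; intro z _
      rw [Subalgebra.mem_center_iff]; intro b; exact hall b z
    have h2 : Module.finrank k (⊤ : Subalgebra k D) = 1 := by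
      rw [← this, hcenter, Subalgebra.finrank_bot]
    rw [Subalgebra.topEquiv.toLinearEquiv.finrank_eq] at h2
    omega
  obtain ⟨s, c, n, h⟩ := cubic (k := k) hdim x e hx
  rcases good_of_step hdim x e hx s c n h with g | ⟨y, hxy, hy⟩
  · exact g
  obtain ⟨a, f, haf, h1, h2⟩ := cube x y _ _ (Algebra.commutes s) (Algebra.commutes c) hxy hy
  have hcen : a * a * a ∈ Subalgebra.center k D := by
    rw [Subalgebra.mem_center_iff]; intro b
    exact (central_of_comm (k := k) hdim x y _ hxy h1 h2 b).symm
  rw [hcenter] at hcen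
  obtain ⟨n, hn⟩ := Algebra.mem_bot.mp hcen
  rcases good_of_step (k := k) hdim a f haf 0 0 n (by rw [hn]; simp) with g | ⟨y, hxy, hy⟩
  · exact g
  · exact final a y hxy (by simpa using hy)

theorem galois_of_aut (L : Type*) [Field L] [Algebra k L] (h3 : Module.finrank k L = 3)
    (σ : L ≃ₐ[k] L) (hσ : σ ≠ 1) : IsGalois k L ∧ IsCyclic (L ≃ₐ[k] L) := by
  haveI : FiniteDimensional k L := Module.finite_of_finrank_pos (by omega)
  have h := IntermediateField.finrank_fixedField_eq_card (⊤ : Subgroup (L ≃ₐ[k] L))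
  have hmul := Module.finrank_mul_finrank k
    (IntermediateField.fixedField (⊤ : Subgroup (L ≃ₐ[k] L))) L
  rw [h, h3] at hmul
  have hcard : Nat.card (⊤ : Subgroup (L ≃ₐ[k] L)) = Nat.card (L ≃ₐ[k] L) := Subgroup.card_top
  rw [hcard] at hmul
  have hd : Nat.card (L ≃ₐ[k] L) ∣ 3 := ⟨_, by rw [mul_comm]; exact hmul.symm⟩
  have hc : Nat.card (L ≃ₐ[k] L) = 3 := by
    rcases (Nat.dvd_prime Nat.prime_three).mp hd with h1 | h1
    · exfalso
      have := (Nat.card_eq_one_iff_unique.mp h1).1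
      exact hσ (Subsingleton.elim _ _)
    · exact h1
  haveI : Fact (Nat.Prime 3) := ⟨Nat.prime_three⟩
  exact ⟨IsGalois.of_card_aut_eq_finrank k L (by rw [hc, h3]), isCyclic_of_prime_card hc⟩

end lin
end WedD

theorem albert_stmt0 (k : Type*) [Field k] (D : Type*) [DivisionRing D] [Algebra k D]
    (hcenter : Subalgebra.center k D = ⊥) (hdim : Module.finrank k D = 9) :
    ∃ L : Subalgebra k D,
      (∀ x ∈ L, ∀ y ∈ L, x * y = y * x) ∧
      ∃ hF : IsField L,
        Module.finrank k L = 3 ∧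
        (letI : Field L := hF.toField
         IsGalois k L ∧ IsCyclic (L ≃ₐ[k] L)) := by
  haveI : FiniteDimensional k D := Module.finite_of_finrank_pos (by omega)
  obtain ⟨x, u, hu, hcomm, hne⟩ := WedD.good (k := k) hcenter hdim
  have hxu : x * u ≠ u * x := by
    intro h; apply hne; rw [← h]; simp [mul_assoc, hu]
  have h3 := WedD.finrank_adjoin3 (k := k) hdim x u hxu
  have hmem := WedD.mem_adjoin (k := k) hdim x u _ hxu hcomm
  have hF : IsField (Algebra.adjoin k {x}) := by
    letI := divisionRingOfFiniteDimensional k (Algebra.adjoin k {x})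
    refine ⟨⟨0, 1, zero_ne_one⟩, fun a b => Subtype.ext (WedD.adjoin_comm x a b a.2 b.2), ?_⟩
    intro a ha
    exact ⟨a⁻¹, mul_inv_cancel₀ ha⟩
  refine ⟨Algebra.adjoin k {x}, fun a ha b hb => WedD.adjoin_comm x a b ha hb, hF, h3, ?_⟩
  letI : Field (Algebra.adjoin k {x}) := hF.toField
  -- conjugation by u
  have hconj : ∀ a ∈ Algebra.adjoin k {x}, u * a * u⁻¹ ∈ Algebra.adjoin k {x} := by
    intro a ha
    induction ha using Algebra.adjoin_induction with
    | mem a ha => rw [Set.mem_singleton_iff.mp ha]; exact hmem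
    | algebraMap r =>
      rw [← Algebra.commutes, mul_assoc, mul_inv_cancel₀ hu, mul_one]
      exact Subalgebra.algebraMap_mem _ r
    | add a b _ _ ha hb => rw [mul_add, add_mul]; exact add_mem ha hb
    | mul a b _ _ ha hb =>
      have : u * (a * b) * u⁻¹ = (u * a * u⁻¹) * (u * b * u⁻¹) := by simp [mul_assoc, hu]
      rw [this]; exact mul_mem ha hb
  let f : Algebra.adjoin k {x} →ₐ[k] Algebra.adjoin k {x} :=
    { toFun := fun a => ⟨u * a * u⁻¹, hconj a a.2⟩
      map_one' := Subtype.ext (by simp [hu])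
      map_mul' := fun a b => Subtype.ext (by simp [mul_assoc, hu])
      map_zero' := Subtype.ext (by simp)
      map_add' := fun a b => Subtype.ext (by simp [mul_add, add_mul])
      commutes' := fun r => Subtype.ext (by
        change u * algebraMap k D r * u⁻¹ = algebraMap k D r
        rw [← Algebra.commutes, mul_assoc, mul_inv_cancel₀ hu, mul_one]) }
  have hinj : Function.Injective f := by
    intro a b hab
    have := congrArg Subtype.val hab
    change u * a * u⁻¹ = u * b * u⁻¹ at this
    exact Subtype.ext (mul_left_cancel₀ hu (mul_right_cancel₀ (inv_ne_zero hu) this))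
  have hbij : Function.Bijective f :=
    ⟨hinj, (LinearMap.injective_iff_surjective (f := f.toLinearMap)).mp hinj⟩
  refine WedD.galois_of_aut _ h3 (AlgEquiv.ofBijective f hbij) ?_
  intro h
  apply hne
  have := congrArg (fun g => (g ⟨x, Algebra.self_mem_adjoin_singleton k x⟩ : Algebra.adjoin k {x}).1) h
  exact this
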